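/- (Escape point of the Pfaff-transformed argument α_ℓ.) Let p*_ℓ := (√(3+2√3) − 1)/2. Then α_ℓ(p*_ℓ) = −1, where α_ℓ(p) := −p³(2+p)/((1−p²)(1+p)²); moreover, for every real p with −1/2 < p < p*_ℓ one has −1 < α_ℓ(p) < 1, and for every real p with p*_ℓ < p < 1 one has α_ℓ(p) < −1. -/

import Mathlib

noncomputable def αℓ (p : ℝ) : ℝ := -(p ^ 3 * (2 + p)) / ((1 - p ^ 2) * (1 + p) ^ 2)

noncomputable def pStarℓ : ℝ := (Real.sqrt (3 + 2 * Real.sqrt 3) - 1) / 2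

/-- Escape point of the Pfaff-transformed argument αℓ. -/
theorem alpha_ell_escape_point :
    αℓ pStarℓ = -1 ∧
    (∀ p : ℝ, -(1/2) < p → p < pStarℓ → -1 < αℓ p ∧ αℓ p < 1) ∧
    (∀ p : ℝ, pStarℓ < p → p < 1 → αℓ p < -1) := by
  obtain ⟨r, hr⟩ : ∃ r, r = Real.sqrt 3 := ⟨_, rfl⟩
  have hr2 : r ^ 2 = 3 := by rw [hr]; exact Real.sq_sqrt (by norm_num)
  have hr0 : 0 ≤ r := by rw [hr]; exact Real.sqrt_nonneg _
  have hr1 : 3 / 2 < r := by nlinarith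
  have hr3 : r < 2 := by nlinarith
  obtain ⟨s, hs⟩ : ∃ s, s = Real.sqrt (3 + 2 * r) := ⟨_, rfl⟩
  have hs2 : s ^ 2 = 3 + 2 * r := by rw [hs]; exact Real.sq_sqrt (by linarith)
  have hs0 : 0 ≤ s := by rw [hs]; exact Real.sqrt_nonneg _
  have hs1 : 1 < s := by nlinarith
  have hs3 : s < 3 := by nlinarith
  have hP : pStarℓ = (s - 1) / 2 := by rw [pStarℓ, hs, hr]
  have hD : ∀ p : ℝ, -(1/2) < p → p < 1 → 0 < (1 - p ^ 2) * (1 + p) ^ 2 := by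
    intro p h1 h2
    have h3 : 0 < 1 - p ^ 2 := by nlinarith
    have h4 : 0 < 1 + p := by linarith
    positivity
  have key : ∀ p : ℝ, (1 - p ^ 2) * (1 + p) ^ 2 - p ^ 3 * (2 + p)
      = (s ^ 2 - (2 * p + 1) ^ 2) * ((2 * p + 1) ^ 2 + (2 * r - 3)) / 8 := by
    intro p
    rw [hs2]
    linear_combination (-1 / 2) * hr2
  rw [hP]
  refine ⟨?_, ?_, ?_⟩
  · have h := hD ((s - 1) / 2) (by linarith) (by linarith)
    have k := key ((s - 1) / 2)
    have e : s ^ 2 - (2 * ((s - 1) / 2) + 1) ^ 2 = 0 := by ring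
    rw [e] at k
    rw [αℓ, div_eq_iff h.ne']
    linarith
  · intro p h1 h2
    have h := hD p h1 (by linarith)
    have k := key p
    have e1 : 0 < s ^ 2 - (2 * p + 1) ^ 2 := by nlinarith
    have e2 : 0 < (2 * p + 1) ^ 2 + (2 * r - 3) := by nlinarith [sq_nonneg (2 * p + 1)]
    have e3 := mul_pos e1 e2
    rw [αℓ, lt_div_iff₀ h, div_lt_iff₀ h]
    constructor
    · linarith
    · nlinarith
  · intro p h1 h2
    have h := hD p (by linarith) h2
    have k := key p
    have e1 : 0 < (2 * p + 1) ^ 2 - s ^ 2 := by nlinarith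
    have e2 : 0 < (2 * p + 1) ^ 2 + (2 * r - 3) := by nlinarith [sq_nonneg (2 * p + 1)]
    have e3 := mul_pos e1 e2
    rw [αℓ, div_lt_iff₀ h]
    linarith
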